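/- arXiv:1404.7357 — 2 statements merged into one kernel-verified Lean document; each statement's English description precedes it below -/
import Mathlib

section
/- Let B > 0, let g : ℝ → ℝ be continuously differentiable with g(0) = 0, g(B) = 0, and g(t) ≥ 0 for all t ∈ [0, B], and let f : ℂ → ℂ be complex-differentiable on an open set U ⊆ ℂ containing the region R = {t + i·s : t ∈ [0, B], 0 ≤ s ≤ g(t)}. Then ∫₀^B f(t) dt = ∫₀^B f(t + i·g(t)) · (1 + i·g′(t)) dt. -/
open Complex intervalIntegral

/-!
Push the real segment onto the contour by the straight-line homotopy `z(t, l) = t + i l g(t)`.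
The pullback of the closed form `f dz` is `f(z) z_t dt + f(z) z_l dl`, and
`∂_l (f(z) z_t) = f'(z) z_t z_l + f(z) z_tl = ∂_t (f(z) z_l)`. Integrating this common mixed
derivative over the rectangle in both orders compares the two contours with the two lateral sides,
which contribute nothing because the homotopy fixes the endpoints. Fubini only needs `z_tl` to be
continuous, whereas Green's theorem would ask for a `C²` homotopy; so `g` may be merely `C¹`.
-/

section CauchyHomotopy

open Set

variable {E : Type*} [NormedAddCommGroup E] {a b c d : ℝ}

theorem integral_sub_eq_integral_sub_of_hasDerivAt [NormedSpace ℝ E] [CompleteSpace E]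
    {F G K : ℝ → ℝ → E}
    (hF : ∀ t ∈ uIcc a b, ∀ l ∈ uIcc c d, HasDerivAt (fun l ↦ F t l) (K t l) l)
    (hG : ∀ t ∈ uIcc a b, ∀ l ∈ uIcc c d, HasDerivAt (fun t ↦ G t l) (K t l) t)
    (hK : ContinuousOn (Function.uncurry K) (uIcc a b ×ˢ uIcc c d)) :
    ∫ t in a..b, (F t d - F t c) = ∫ l in c..d, (G b l - G a l) := by
  have hK_left : ∀ t ∈ uIcc a b, ContinuousOn (fun l ↦ K t l) (uIcc c d) :=
    fun t ht ↦ hK.uncurry_left t ht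
  have hK_right : ∀ l ∈ uIcc c d, ContinuousOn (fun t ↦ K t l) (uIcc a b) :=
    fun l hl ↦ hK.uncurry_right l hl
  calc ∫ t in a..b, (F t d - F t c)
      = ∫ t in a..b, ∫ l in c..d, K t l := integral_congr fun t ht ↦
        (integral_eq_sub_of_hasDerivAt (hF t ht) (hK_left t ht).intervalIntegrable).symm
    _ = ∫ l in c..d, ∫ t in a..b, K t l :=
        MeasureTheory.intervalIntegral_intervalIntegral_swap <|
          (hK.integrableOn_compact (isCompact_uIcc.prod isCompact_uIcc)).mono_set
            (prod_mono uIoc_subset_uIcc uIoc_subset_uIcc)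
    _ = ∫ l in c..d, (G b l - G a l) := integral_congr fun l hl ↦
        integral_eq_sub_of_hasDerivAt (fun t ht ↦ hG t ht l hl)
          (hK_right l hl).intervalIntegrable

variable [NormedSpace ℂ E] [CompleteSpace E] {f : ℂ → E} {U : Set ℂ}

theorem integral_homotopy_boundary_eq_of_differentiableOn {z zt zl ztl : ℝ → ℝ → ℂ}
    (hU : IsOpen U) (hf : DifferentiableOn ℂ f U)
    (hzU : ∀ t ∈ uIcc a b, ∀ l ∈ uIcc c d, z t l ∈ U)
    (hzt : ∀ t ∈ uIcc a b, ∀ l ∈ uIcc c d, HasDerivAt (fun t ↦ z t l) (zt t l) t)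
    (hzl : ∀ t ∈ uIcc a b, ∀ l ∈ uIcc c d, HasDerivAt (fun l ↦ z t l) (zl t l) l)
    (hztl : ∀ t ∈ uIcc a b, ∀ l ∈ uIcc c d, HasDerivAt (fun l ↦ zt t l) (ztl t l) l)
    (hzlt : ∀ t ∈ uIcc a b, ∀ l ∈ uIcc c d, HasDerivAt (fun t ↦ zl t l) (ztl t l) t)
    (hz_cont : ContinuousOn (Function.uncurry z) (uIcc a b ×ˢ uIcc c d))
    (hzt_cont : ContinuousOn (Function.uncurry zt) (uIcc a b ×ˢ uIcc c d))
    (hzl_cont : ContinuousOn (Function.uncurry zl) (uIcc a b ×ˢ uIcc c d))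
    (hztl_cont : ContinuousOn (Function.uncurry ztl) (uIcc a b ×ˢ uIcc c d)) :
    ∫ t in a..b, (zt t d • f (z t d) - zt t c • f (z t c))
      = ∫ l in c..d, (zl b l • f (z b l) - zl a l • f (z a l)) := by
  have hf_deriv : ∀ t ∈ uIcc a b, ∀ l ∈ uIcc c d, HasDerivAt f (deriv f (z t l)) (z t l) :=
    fun t ht l hl ↦ hf.hasDerivAt (hU.mem_nhds (hzU t ht l hl))
  have hz_mapsTo : MapsTo (Function.uncurry z) (uIcc a b ×ˢ uIcc c d) U :=
    fun p hp ↦ hzU p.1 hp.1 p.2 hp.2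
  refine integral_sub_eq_integral_sub_of_hasDerivAt
    (F := fun t l ↦ zt t l • f (z t l)) (G := fun t l ↦ zl t l • f (z t l))
    (K := fun t l ↦ (zt t l * zl t l) • deriv f (z t l) + ztl t l • f (z t l))
    (fun t ht l hl ↦ ?_) (fun t ht l hl ↦ ?_) ?_
  · rw [mul_smul]
    exact (hztl t ht l hl).smul ((hf_deriv t ht l hl).scomp l (hzl t ht l hl))
  · rw [mul_comm, mul_smul]
    exact (hzlt t ht l hl).smul ((hf_deriv t ht l hl).scomp t (hzt t ht l hl))
  · exact ((hzt_cont.mul hzl_cont).smul ((hf.deriv hU).continuousOn.comp hz_cont hz_mapsTo)).add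
      (hztl_cont.smul (hf.continuousOn.comp hz_cont hz_mapsTo))

theorem integral_smul_comp_eq_of_segment_subset {γ₀ γ₁ γ₀' γ₁' : ℝ → ℂ}
    (hγ₀ : ∀ t ∈ uIcc a b, HasDerivAt γ₀ (γ₀' t) t) (hγ₀' : ContinuousOn γ₀' (uIcc a b))
    (hγ₁ : ∀ t ∈ uIcc a b, HasDerivAt γ₁ (γ₁' t) t) (hγ₁' : ContinuousOn γ₁' (uIcc a b))
    (ha : γ₀ a = γ₁ a) (hb : γ₀ b = γ₁ b)
    (hU : IsOpen U) (hγU : ∀ t ∈ uIcc a b, segment ℝ (γ₀ t) (γ₁ t) ⊆ U)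
    (hf : DifferentiableOn ℂ f U) :
    ∫ t in a..b, γ₀' t • f (γ₀ t) = ∫ t in a..b, γ₁' t • f (γ₁ t) := by
  have hγ₀_cont : ContinuousOn γ₀ (uIcc a b) := HasDerivAt.continuousOn hγ₀
  have hγ₁_cont : ContinuousOn γ₁ (uIcc a b) := HasDerivAt.continuousOn hγ₁
  have hint₀ : IntervalIntegrable (fun t ↦ γ₀' t • f (γ₀ t)) MeasureTheory.volume a b :=
    (hγ₀'.smul (hf.continuousOn.comp hγ₀_cont
      fun t ht ↦ hγU t ht (left_mem_segment ℝ _ _))).intervalIntegrable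
  have hint₁ : IntervalIntegrable (fun t ↦ γ₁' t • f (γ₁ t)) MeasureTheory.volume a b :=
    (hγ₁'.smul (hf.continuousOn.comp hγ₁_cont
      fun t ht ↦ hγU t ht (right_mem_segment ℝ _ _))).intervalIntegrable
  have hfst : MapsTo Prod.fst (uIcc a b ×ˢ uIcc (0 : ℝ) 1) (uIcc a b) := fun _ hp ↦ hp.1
  have hscale (w : ℂ) (l : ℝ) : HasDerivAt (fun l : ℝ ↦ l • w) w l := by
    simpa using (hasDerivAt_id l).smul_const w
  have hboundary := integral_homotopy_boundary_eq_of_differentiableOn (c := 0) (d := 1)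
    (z := fun t l ↦ γ₀ t + l • (γ₁ t - γ₀ t)) (zt := fun t l ↦ γ₀' t + l • (γ₁' t - γ₀' t))
    (zl := fun t _ ↦ γ₁ t - γ₀ t) (ztl := fun t _ ↦ γ₁' t - γ₀' t) hU hf
    (fun t ht l hl ↦ hγU t ht <| by
      rw [segment_eq_image']
      exact mem_image_of_mem _ (uIcc_of_le (zero_le_one' ℝ) ▸ hl))
    (fun t ht l _ ↦ (hγ₀ t ht).add (((hγ₁ t ht).sub (hγ₀ t ht)).const_smul l))
    (fun t _ l _ ↦ (hscale (γ₁ t - γ₀ t) l).const_add _)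
    (fun t _ l _ ↦ (hscale (γ₁' t - γ₀' t) l).const_add _)
    (fun t ht _ _ ↦ (hγ₁ t ht).sub (hγ₀ t ht))
    ((hγ₀_cont.comp continuousOn_fst hfst).add
      (continuousOn_snd.smul ((hγ₁_cont.sub hγ₀_cont).comp continuousOn_fst hfst)))
    ((hγ₀'.comp continuousOn_fst hfst).add
      (continuousOn_snd.smul ((hγ₁'.sub hγ₀').comp continuousOn_fst hfst)))
    ((hγ₁_cont.sub hγ₀_cont).comp continuousOn_fst hfst)
    ((hγ₁'.sub hγ₀').comp continuousOn_fst hfst)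
  have hdiff : ∫ t in a..b, (γ₁' t • f (γ₁ t) - γ₀' t • f (γ₀ t)) = 0 := by
    simpa [ha, hb] using hboundary
  rw [integral_sub hint₁ hint₀] at hdiff
  exact (sub_eq_zero.mp hdiff).symm

theorem contour_deformation_general {g g' : ℝ → ℝ}
    (hg : ∀ t ∈ uIcc a b, HasDerivAt g (g' t) t) (hg' : ContinuousOn g' (uIcc a b))
    (hga : g a = 0) (hgb : g b = 0)
    (hU : IsOpen U) (hgU : ∀ t ∈ uIcc a b, ∀ s ∈ uIcc 0 (g t), (t : ℂ) + I * s ∈ U)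
    (hf : DifferentiableOn ℂ f U) :
    ∫ t in a..b, f t = ∫ t in a..b, (1 + I * g' t) • f (t + I * g t) := by
  have hvertical : ∀ t ∈ uIcc a b, segment ℝ (t : ℂ) (t + I * g t) ⊆ U := by
    intro t ht
    rw [segment_eq_image']
    rintro _ ⟨l, hl, rfl⟩
    have hlg : l * g t ∈ uIcc 0 (g t) := by
      rw [← segment_eq_uIcc, segment_eq_image']
      exact ⟨l, hl, by simp⟩
    simpa [mul_left_comm] using hgU t ht _ hlg
  have hid (t : ℝ) : HasDerivAt (fun t : ℝ ↦ (t : ℂ)) 1 t := (hasDerivAt_id t).ofReal_comp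
  simpa only [one_smul] using integral_smul_comp_eq_of_segment_subset
    (fun t _ ↦ hid t) continuousOn_const
    (fun t ht ↦ (hid t).fun_add ((hg t ht).ofReal_comp.const_mul I))
    (continuousOn_const.add (continuousOn_const.mul (continuous_ofReal.comp_continuousOn hg')))
    (by simp [hga]) (by simp [hgb]) hU hvertical hf

end CauchyHomotopy

theorem contour_deformation (B : ℝ) (hB : 0 < B) (g : ℝ → ℝ)
    (hg : ContDiff ℝ 1 g) (hg0 : g 0 = 0) (hgB : g B = 0)
    (hgpos : ∀ t ∈ Set.Icc 0 B, 0 ≤ g t)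
    (f : ℂ → ℂ) (U : Set ℂ) (hU : IsOpen U)
    (hRU : {z : ℂ | ∃ t ∈ Set.Icc (0 : ℝ) B, ∃ s : ℝ, 0 ≤ s ∧ s ≤ g t ∧
      z = (t : ℂ) + Complex.I * s} ⊆ U)
    (hf : DifferentiableOn ℂ f U) :
    ∫ t in (0 : ℝ)..B, f t
      = ∫ t in (0 : ℝ)..B, f ((t : ℂ) + Complex.I * g t) * (1 + Complex.I * deriv g t) := by
  have hregion : ∀ t ∈ Set.uIcc 0 B, ∀ s ∈ Set.uIcc 0 (g t), (t : ℂ) + I * s ∈ U := by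
    intro t ht s hs
    rw [Set.uIcc_of_le hB.le] at ht
    rw [Set.uIcc_of_le (hgpos t ht)] at hs
    exact hRU ⟨t, ht, s, hs.1, hs.2, rfl⟩
  simpa only [smul_eq_mul, mul_comm] using contour_deformation_general
    (fun t _ ↦ (hg.differentiable one_ne_zero t).hasDerivAt)
    (hg.continuous_deriv le_rfl).continuousOn hg0 hgB hU hregion hf
end

section
/- Let Ĩ : ℝ² → ℂ be integrable and supported in the closed ball of radius k_m > 0 centered at the origin, let γ ≥ 0 be real and d = (Δx, Δy) ∈ ℝ². Then (1/4π²) ∫_{ℝ²} Ĩ(k) e^{−i(k_x Δx + k_y Δy)} e^{γ(k_x Δx + k_y Δy)} dk = Σ_{p=0}^{∞} Σ_{q=0}^{∞} (γ^{p+q} Δx^p Δy^q / (p! q!)) · (1/4π²) ∫_{ℝ²} k_x^p k_y^q Ĩ(k) e^{−i(k_x Δx + k_y Δy)} dk, where the double series converges absolutely. -/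
/-!
The deformation factor splits as `exp (γ (k·d)) = exp (γ kₓ Δx) * exp (γ k_y Δy)`, so its double
Taylor series is a product of two exponential series. The norms of its terms sum to
`exp (‖γ kₓ Δx‖ + ‖γ k_y Δy‖)`; once this weight times `Ĩ` is integrable, dominated convergence
lets the series be integrated term by term. The weight is continuous, hence bounded on a compact
set carrying `Ĩ`.
-/

open MeasureTheory Complex

open scoped Nat

theorem hasSum_exp_mul_exp {𝔸 : Type*} [NormedDivisionRing 𝔸] [NormedAlgebra ℚ 𝔸]
    [CompleteSpace 𝔸] (a b : 𝔸) :
    HasSum (fun pq : ℕ × ℕ => a ^ pq.1 / pq.1 ! * (b ^ pq.2 / pq.2 !))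
      (NormedSpace.exp a * NormedSpace.exp b) := by
  have hsummable := summable_mul_of_summable_norm
    (NormedSpace.norm_expSeries_div_summable a) (NormedSpace.norm_expSeries_div_summable b)
  have hprod := (NormedSpace.expSeries_div_hasSum_exp a).mul
    (NormedSpace.expSeries_div_hasSum_exp b) hsummable
  simpa only using hprod

theorem hasSum_rexp_add (a b : ℝ) :
    HasSum (fun pq : ℕ × ℕ => a ^ pq.1 / pq.1 ! * (b ^ pq.2 / pq.2 !)) (Real.exp (a + b)) := by
  rw [Real.exp_add, Real.exp_eq_exp_ℝ]
  exact hasSum_exp_mul_exp a b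

theorem hasSum_cexp_add (a b : ℂ) :
    HasSum (fun pq : ℕ × ℕ => a ^ pq.1 / pq.1 ! * (b ^ pq.2 / pq.2 !)) (cexp (a + b)) := by
  rw [Complex.exp_add, Complex.exp_eq_exp_ℂ]
  exact hasSum_exp_mul_exp a b

section TermwiseIntegration

variable {X E : Type*} [MeasurableSpace X] {μ : Measure X} [NormedAddCommGroup E]
  [NormedSpace ℂ E] {u v : X → ℂ} {g : X → E}

theorem hasSum_integral_cexp_add_smul (hu : AEStronglyMeasurable u μ)
    (hv : AEStronglyMeasurable v μ)
    (hg : Integrable (fun x => Real.exp (‖u x‖ + ‖v x‖) • g x) μ) :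
    HasSum (fun pq : ℕ × ℕ => ∫ x, (u x ^ pq.1 / pq.1 ! * (v x ^ pq.2 / pq.2 !)) • g x ∂μ)
      (∫ x, cexp (u x + v x) • g x ∂μ) := by
  have hg_meas : AEStronglyMeasurable g μ :=
    (aestronglyMeasurable_smul_iff₀
      (Real.continuous_exp.comp_aestronglyMeasurable (hu.norm.add hv.norm))
      (.of_forall fun x => (Real.exp_pos _).ne')).1 hg.aestronglyMeasurable
  have hsum_norm (x : X) :
      HasSum (fun pq : ℕ × ℕ => ‖u x‖ ^ pq.1 / pq.1 ! * (‖v x‖ ^ pq.2 / pq.2 !) * ‖g x‖)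
        ‖Real.exp (‖u x‖ + ‖v x‖) • g x‖ := by
    simpa only [norm_smul, Real.norm_eq_abs, Real.abs_exp] using
      (hasSum_rexp_add ‖u x‖ ‖v x‖).mul_right ‖g x‖
  refine hasSum_integral_of_dominated_convergence
    (fun pq x => ‖u x‖ ^ pq.1 / pq.1 ! * (‖v x‖ ^ pq.2 / pq.2 !) * ‖g x‖)
    (fun pq => ?_) (fun pq => .of_forall fun x => ?_)
    (.of_forall fun x => (hsum_norm x).summable) ?_
    (.of_forall fun x => (hasSum_cexp_add (u x) (v x)).smul_const (g x))
  · simp only [div_eq_mul_inv]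
    exact (((hu.pow _).mul_const _).mul ((hv.pow _).mul_const _)).smul hg_meas
  · simp only [norm_smul, norm_mul, norm_div, norm_pow, Complex.norm_natCast, le_refl]
  · simpa only [(hsum_norm _).tsum_eq] using hg.norm

theorem hasSum_smul_integral_pow_mul_pow_smul (hu : AEStronglyMeasurable u μ)
    (hv : AEStronglyMeasurable v μ) (a b : ℂ)
    (hg : Integrable (fun x => Real.exp (‖a * u x‖ + ‖b * v x‖) • g x) μ) :
    HasSum
      (fun pq : ℕ × ℕ =>
        (a ^ pq.1 * b ^ pq.2 / (pq.1 ! * pq.2 !)) • ∫ x, (u x ^ pq.1 * v x ^ pq.2) • g x ∂μ)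
      (∫ x, cexp (a * u x + b * v x) • g x ∂μ) := by
  convert hasSum_integral_cexp_add_smul (hu.const_mul a) (hv.const_mul b) hg using 2 with pq
  simp only [← integral_smul, smul_smul]
  congr with x
  ring_nf

end TermwiseIntegration

theorem integrable_smul_of_continuousOn_of_support_subset {X 𝕜 E : Type*} [TopologicalSpace X]
    [T2Space X] [MeasurableSpace X] [OpensMeasurableSpace X] {μ : Measure X} [NormedRing 𝕜]
    [SecondCountableTopologyEither X 𝕜] [NormedAddCommGroup E] [Module 𝕜 E] [NormSMulClass 𝕜 E]
    {w : X → 𝕜} {f : X → E} {K : Set X} (hw : ContinuousOn w K) (hf : Integrable f μ)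
    (hK : IsCompact K) (hfK : f.support ⊆ K) : Integrable (fun x => w x • f x) μ :=
  (integrableOn_iff_integrable_of_support_subset
    ((Function.support_smul_subset_right w f).trans hfK)).1
    (hf.integrableOn.continuousOn_smul hw hK)

theorem norm_cexp_neg_I_mul_ofReal (t : ℝ) : ‖cexp (-Complex.I * t)‖ = 1 := by
  simpa only [ofReal_neg, mul_neg, neg_mul] using norm_exp_I_mul_ofReal (-t)

theorem cfft_double_series_general {μ : Measure (EuclideanSpace ℝ (Fin 2))}
    (Itil : EuclideanSpace ℝ (Fin 2) → ℂ) (γ : ℂ) (Δx Δy : ℝ)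
    (hI : Integrable
      (fun k => Real.exp (‖γ * Δx * k 0‖ + ‖γ * Δy * k 1‖) • Itil k) μ) :
    HasSum
      (fun pq : ℕ × ℕ =>
        (γ ^ (pq.1 + pq.2) * (Δx : ℂ) ^ pq.1 * (Δy : ℂ) ^ pq.2 /
            (pq.1.factorial * pq.2.factorial)) *
          ((1 / (4 * (Real.pi : ℂ) ^ 2)) *
            ∫ k : EuclideanSpace ℝ (Fin 2),
              ((k 0 : ℂ)) ^ pq.1 * ((k 1 : ℂ)) ^ pq.2 * Itil k *
                Complex.exp (-Complex.I * (k 0 * Δx + k 1 * Δy : ℝ)) ∂μ))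
      ((1 / (4 * (Real.pi : ℂ) ^ 2)) *
        ∫ k : EuclideanSpace ℝ (Fin 2),
          Itil k * Complex.exp (-Complex.I * (k 0 * Δx + k 1 * Δy : ℝ)) *
            Complex.exp (γ * (k 0 * Δx + k 1 * Δy : ℝ)) ∂μ)
    ∧ Summable
      (fun pq : ℕ × ℕ =>
        ‖(γ ^ (pq.1 + pq.2) * (Δx : ℂ) ^ pq.1 * (Δy : ℂ) ^ pq.2 /
            (pq.1.factorial * pq.2.factorial)) *
          ((1 / (4 * (Real.pi : ℂ) ^ 2)) *
            ∫ k : EuclideanSpace ℝ (Fin 2),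
              ((k 0 : ℂ)) ^ pq.1 * ((k 1 : ℂ)) ^ pq.2 * Itil k *
                Complex.exp (-Complex.I * (k 0 * Δx + k 1 * Δy : ℝ)) ∂μ)‖) := by
  let phase (k : EuclideanSpace ℝ (Fin 2)) : ℂ :=
    cexp (-Complex.I * (k 0 * Δx + k 1 * Δy : ℝ))
  have hI_phase : Integrable (fun k => Real.exp (‖γ * Δx * k 0‖ + ‖γ * Δy * k 1‖) •
      (Itil k * phase k)) μ := by
    simpa only [smul_mul_assoc] using hI.mul_bdd (c := 1)
      (by fun_prop : Continuous phase).aestronglyMeasurable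
      (.of_forall fun k => (norm_cexp_neg_I_mul_ofReal _).le)
  have hseries := hasSum_smul_integral_pow_mul_pow_smul
    (by fun_prop : AEStronglyMeasurable (fun k : EuclideanSpace ℝ (Fin 2) => (k 0 : ℂ)) μ)
    (by fun_prop : AEStronglyMeasurable (fun k : EuclideanSpace ℝ (Fin 2) => (k 1 : ℂ)) μ)
    (γ * Δx) (γ * Δy) hI_phase
  have integrand_eq (k : EuclideanSpace ℝ (Fin 2)) :
      cexp (γ * Δx * k 0 + γ * Δy * k 1) • (Itil k * phase k) =
        Itil k * phase k * cexp (γ * (k 0 * Δx + k 1 * Δy : ℝ)) := by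
    rw [smul_eq_mul, mul_comm, ofReal_add, ofReal_mul, ofReal_mul]
    ring_nf
  simp only [integrand_eq] at hseries
  suffices h : HasSum _ _ from ⟨h, h.summable.norm⟩
  refine (hseries.mul_left (1 / (4 * (Real.pi : ℂ) ^ 2))).congr_fun fun pq => ?_
  simp only [phase, smul_eq_mul, mul_assoc]
  ring

theorem cfft_double_series (Itil : EuclideanSpace ℝ (Fin 2) → ℂ)
    (hI : Integrable Itil) (km : ℝ) (hkm : 0 < km)
    (hsupp : Function.support Itil ⊆ Metric.closedBall 0 km)
    (γ : ℝ) (hγ : 0 ≤ γ) (Δx Δy : ℝ) :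
    HasSum
      (fun pq : ℕ × ℕ =>
        ((γ : ℂ) ^ (pq.1 + pq.2) * (Δx : ℂ) ^ pq.1 * (Δy : ℂ) ^ pq.2 /
            (pq.1.factorial * pq.2.factorial)) *
          ((1 / (4 * (Real.pi : ℂ) ^ 2)) *
            ∫ k : EuclideanSpace ℝ (Fin 2),
              ((k 0 : ℂ)) ^ pq.1 * ((k 1 : ℂ)) ^ pq.2 * Itil k *
                Complex.exp (-Complex.I * (k 0 * Δx + k 1 * Δy : ℝ))))
      ((1 / (4 * (Real.pi : ℂ) ^ 2)) *
        ∫ k : EuclideanSpace ℝ (Fin 2),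
          Itil k * Complex.exp (-Complex.I * (k 0 * Δx + k 1 * Δy : ℝ)) *
            Complex.exp ((γ : ℂ) * (k 0 * Δx + k 1 * Δy : ℝ)))
    ∧ Summable
      (fun pq : ℕ × ℕ =>
        ‖((γ : ℂ) ^ (pq.1 + pq.2) * (Δx : ℂ) ^ pq.1 * (Δy : ℂ) ^ pq.2 /
            (pq.1.factorial * pq.2.factorial)) *
          ((1 / (4 * (Real.pi : ℂ) ^ 2)) *
            ∫ k : EuclideanSpace ℝ (Fin 2),
              ((k 0 : ℂ)) ^ pq.1 * ((k 1 : ℂ)) ^ pq.2 * Itil k *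
                Complex.exp (-Complex.I * (k 0 * Δx + k 1 * Δy : ℝ)))‖) :=
  cfft_double_series_general Itil γ Δx Δy <|
    integrable_smul_of_continuousOn_of_support_subset
      (by fun_prop) hI (isCompact_closedBall 0 km) hsupp
end
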